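/- arXiv:1808.04199 — 2 statements merged into one kernel-verified Lean document; each statement's English description precedes it below -/
import Mathlib

section
/- For all n ≥ 1, t ≥ 0, and 1 ≤ k ≤ n: η(n,k) = η(n, n−k+1) and μ_U(n,t,k) = μ_D(n, t+1, n−k+1). -/
/-!  Common definitions: permutation patterns, separated pairs, rev-tier. -/

/-- `π` contains the pattern `σ`. -/
def Pattern.Contains {n k : ℕ} (π : Equiv.Perm (Fin n)) (σ : Equiv.Perm (Fin k)) : Prop :=
  ∃ α : Fin k → Fin n, StrictMono α ∧ ∀ i j : Fin k, (π (α i) < π (α j) ↔ σ i < σ j)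

/-- `π` avoids the pattern `σ`. -/
def Pattern.Avoids {n k : ℕ} (π : Equiv.Perm (Fin n)) (σ : Equiv.Perm (Fin k)) : Prop :=
  ¬ Pattern.Contains π σ

/-- The pair of values `(a, a+1)` (0-indexed) is an up oriented separated pair in `σ`:
`a` precedes `a+1` and some value `> a+1` occurs strictly between them. -/
def UpSepPair {n : ℕ} (σ : Equiv.Perm (Fin n)) (a : Fin n) : Prop :=
  ∃ hb : (a : ℕ) + 1 < n,
    σ.symm a < σ.symm ⟨(a : ℕ) + 1, hb⟩ ∧
    ∃ p : Fin n, σ.symm a < p ∧ p < σ.symm ⟨(a : ℕ) + 1, hb⟩ ∧ (a : ℕ) + 1 < (σ p : ℕ)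

/-- The pair of values `(a, a+1)` (0-indexed) is a down oriented separated pair in `σ`. -/
def DownSepPair {n : ℕ} (σ : Equiv.Perm (Fin n)) (a : Fin n) : Prop :=
  ∃ hb : (a : ℕ) + 1 < n,
    σ.symm ⟨(a : ℕ) + 1, hb⟩ < σ.symm a ∧
    ∃ p : Fin n, σ.symm ⟨(a : ℕ) + 1, hb⟩ < p ∧ p < σ.symm a ∧ (a : ℕ) + 1 < (σ p : ℕ)

/-- `(a, a+1)` is a separated pair (of either orientation). -/
def SepPair {n : ℕ} (σ : Equiv.Perm (Fin n)) (a : Fin n) : Prop :=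
  UpSepPair σ a ∨ DownSepPair σ a

/-- `σ` has no separated pairs. -/
def NoSepPairs {n : ℕ} (σ : Equiv.Perm (Fin n)) : Prop :=
  ∀ a : Fin n, ¬ SepPair σ a

/-- `f` lists the lower values of an increasing sequence of separated pairs in `σ` with
alternating orientations; the first pair is down oriented iff `firstDown = true`. -/
def AltChain {n : ℕ} (σ : Equiv.Perm (Fin n)) (firstDown : Bool) {t : ℕ}
    (f : Fin t → Fin n) : Prop :=
  StrictMono f ∧ ∀ j : Fin t,
    if ((j : ℕ) % 2 = 0) ↔ (firstDown = true) then DownSepPair σ (f j)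
    else UpSepPair σ (f j)

/-- The rev-tier of `σ`: the maximal length of an increasing sequence of separated pairs
with alternating orientations beginning with a down oriented pair. -/
noncomputable def revTier {n : ℕ} (σ : Equiv.Perm (Fin n)) : ℕ :=
  sSup {t : ℕ | ∃ f : Fin t → Fin n, AltChain σ true f}

/-- Maximal length of an increasing alternating sequence of separated pairs (either
starting orientation). -/
noncomputable def maxAltLen {n : ℕ} (σ : Equiv.Perm (Fin n)) : ℕ :=
  sSup {t : ℕ | ∃ b : Bool, ∃ f : Fin t → Fin n, AltChain σ b f}

/-- `σ` has a separated pair and every maximum-length increasing alternating sequence of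
separated pairs begins with an up oriented pair. -/
def UpOriented {n : ℕ} (σ : Equiv.Perm (Fin n)) : Prop :=
  1 ≤ maxAltLen σ ∧ ¬ ∃ f : Fin (maxAltLen σ) → Fin n, AltChain σ true f

/-- `σ` has a separated pair and every maximum-length increasing alternating sequence of
separated pairs begins with a down oriented pair. -/
def DownOriented {n : ℕ} (σ : Equiv.Perm (Fin n)) : Prop :=
  1 ≤ maxAltLen σ ∧ ¬ ∃ f : Fin (maxAltLen σ) → Fin n, AltChain σ false f

/-- `σ` is a basis element of the class of permutations of rev-tier at most `t`. -/
def IsBasisElt (t : ℕ) {n : ℕ} (σ : Equiv.Perm (Fin n)) : Prop :=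
  t + 1 ≤ revTier σ ∧
  ∀ (m : ℕ) (τ : Equiv.Perm (Fin m)), m < n → Pattern.Contains σ τ → revTier τ ≤ t

/-- The entry `1` of `σ` is in (1-indexed) position `k`. -/
def onePos {n : ℕ} (σ : Equiv.Perm (Fin n)) (k : ℕ) : Prop :=
  ∀ h : 0 < n, (σ.symm ⟨0, h⟩ : ℕ) + 1 = k

/-- `η(n,k)`: number of permutations of length `n` with no separated pairs and entry `1`
in position `k`. -/
noncomputable def eta (n k : ℕ) : ℕ :=
  Nat.card {σ : Equiv.Perm (Fin n) // NoSepPairs σ ∧ onePos σ k}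

/-- `η(n)`: number of permutations of length `n` with no separated pairs. -/
noncomputable def etaTot (n : ℕ) : ℕ :=
  Nat.card {σ : Equiv.Perm (Fin n) // NoSepPairs σ}

/-- `μ_U(n,t,k)`: number of up-oriented permutations of length `n`, rev-tier `t`, with
entry `1` in position `k`. -/
noncomputable def muU (n t k : ℕ) : ℕ :=
  Nat.card {σ : Equiv.Perm (Fin n) // UpOriented σ ∧ revTier σ = t ∧ onePos σ k}

/-- `μ_D(n,t,k)`: number of down-oriented permutations of length `n`, rev-tier `t`, with
entry `1` in position `k`. -/
noncomputable def muD (n t k : ℕ) : ℕ :=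
  Nat.card {σ : Equiv.Perm (Fin n) // DownOriented σ ∧ revTier σ = t ∧ onePos σ k}

/-- `π` is a down-up alternating permutation: `π₁ > π₂ < π₃ > ⋯`. -/
def DownUp {n : ℕ} (π : Equiv.Perm (Fin n)) : Prop :=
  ∀ (i : ℕ) (h : i + 1 < n),
    if i % 2 = 0 then π ⟨i + 1, h⟩ < π ⟨i, by omega⟩
    else π ⟨i, by omega⟩ < π ⟨i + 1, h⟩

/-- The Entringer number `E_{n,k}`: down-up alternating permutations of length `n` whose
first entry is `k` (1-indexed value). -/
noncomputable def entringer (n k : ℕ) : ℕ :=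
  Nat.card {π : Equiv.Perm (Fin n) // DownUp π ∧ ∀ h : 0 < n, (π ⟨0, h⟩ : ℕ) + 1 = k}

/-- The reversal of a permutation: `(revP σ) j = σ (n + 1 - j)`. -/
def revP {n : ℕ} (σ : Equiv.Perm (Fin n)) : Equiv.Perm (Fin n) :=
  (Fin.revPerm).trans σ

/-- The explicit maximal rev-tier permutation of length `n` (0-indexed values):
the even entries of `{1,…,n}` in decreasing order, then `n`, then the odd entries in
increasing order. -/
def maxPermVal (n : ℕ) (i : Fin n) : Fin n :=
  if h1 : (i : ℕ) < (n - 1) / 2 then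
    ⟨2 * ((n - 1) / 2) - 2 * (i : ℕ) - 1, by omega⟩
  else if h2 : (i : ℕ) = (n - 1) / 2 then
    ⟨n - 1, by have := i.isLt; omega⟩
  else
    ⟨2 * ((i : ℕ) - (n - 1) / 2 - 1), by have := i.isLt; omega⟩

def p231 : Equiv.Perm (Fin 3) :=
  ⟨![1, 2, 0], ![2, 0, 1], by decide, by decide⟩

def p132 : Equiv.Perm (Fin 3) :=
  ⟨![0, 2, 1], ![0, 2, 1], by decide, by decide⟩

def p2413 : Equiv.Perm (Fin 4) :=
  ⟨![1, 3, 0, 2], ![2, 0, 3, 1], by decide, by decide⟩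

def p2431 : Equiv.Perm (Fin 4) :=
  ⟨![1, 3, 2, 0], ![3, 0, 2, 1], by decide, by decide⟩

def p23154 : Equiv.Perm (Fin 5) :=
  ⟨![1, 2, 0, 4, 3], ![2, 0, 1, 4, 3], by decide, by decide⟩

def p24153 : Equiv.Perm (Fin 5) :=
  ⟨![1, 3, 0, 4, 2], ![2, 0, 4, 1, 3], by decide, by decide⟩

def p24513 : Equiv.Perm (Fin 5) :=
  ⟨![1, 3, 4, 0, 2], ![3, 0, 4, 1, 2], by decide, by decide⟩

def p24531 : Equiv.Perm (Fin 5) :=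
  ⟨![1, 3, 4, 2, 0], ![4, 0, 3, 1, 2], by decide, by decide⟩

def p42513 : Equiv.Perm (Fin 5) :=
  ⟨![3, 1, 4, 0, 2], ![3, 1, 4, 0, 2], by decide, by decide⟩

def p42531 : Equiv.Perm (Fin 5) :=
  ⟨![3, 1, 4, 2, 0], ![4, 1, 3, 0, 2], by decide, by decide⟩

def p231564 : Equiv.Perm (Fin 6) :=
  ⟨![1, 2, 0, 4, 5, 3], ![2, 0, 1, 5, 3, 4], by decide, by decide⟩

def p261453 : Equiv.Perm (Fin 6) :=
  ⟨![1, 5, 0, 3, 4, 2], ![2, 0, 5, 3, 4, 1], by decide, by decide⟩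

def p523164 : Equiv.Perm (Fin 6) :=
  ⟨![4, 1, 2, 0, 5, 3], ![3, 1, 2, 5, 0, 4], by decide, by decide⟩

def p562413 : Equiv.Perm (Fin 6) :=
  ⟨![4, 5, 1, 3, 0, 2], ![4, 2, 5, 3, 0, 1], by decide, by decide⟩

def p562431 : Equiv.Perm (Fin 6) :=
  ⟨![4, 5, 1, 3, 2, 0], ![5, 2, 4, 3, 0, 1], by decide, by decide⟩

def p6723154 : Equiv.Perm (Fin 7) :=
  ⟨![5, 6, 1, 2, 0, 4, 3], ![4, 2, 3, 6, 5, 0, 1], by decide, by decide⟩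

def p4321 : Equiv.Perm (Fin 4) :=
  ⟨![3, 2, 1, 0], ![3, 2, 1, 0], by decide, by decide⟩

def p4213 : Equiv.Perm (Fin 4) :=
  ⟨![3, 1, 0, 2], ![2, 1, 3, 0], by decide, by decide⟩

/-!
Reversal is an involution of the permutations of length `n`. It moves the entry `1` from
position `k` to position `n - k + 1` and swaps the two orientations of every separated pair, so it
preserves the absence of separated pairs.

Let `d` and `u` be the maximal lengths of the alternating chains that begin with a down, resp. an
up, oriented pair; thus `d` is the rev-tier, and reversal swaps `d` and `u`. Deleting the first pair
of a chain flips its initial orientation, so `d` and `u` differ by at most one. Hence a permutation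
is up-oriented of rev-tier `t` iff `(d, u) = (t, t + 1)`, and down-oriented of rev-tier `t + 1` iff
`(d, u) = (t + 1, t)`, and reversal exchanges these two conditions.
-/

lemma iff_bool_not_iff {p : Prop} {b : Bool} :
    (p ↔ (!b) = true) ↔ ¬(p ↔ b = true) := by
  cases b <;> simp

section Reversal

variable {n : ℕ} (σ : Equiv.Perm (Fin n))

lemma revP_apply (p : Fin n) : revP σ p = σ p.rev := rfl

lemma revP_symm_apply (a : Fin n) : (revP σ).symm a = (σ.symm a).rev := rfl

lemma revP_involutive : Function.Involutive (revP (n := n)) := fun σ => by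
  ext p
  rw [revP_apply, revP_apply, Fin.rev_rev]

lemma card_subtype_eq_of_iff_revP {P Q : Equiv.Perm (Fin n) → Prop}
    (h : ∀ σ, P σ ↔ Q (revP σ)) : Nat.card {σ // P σ} = Nat.card {σ // Q σ} :=
  Nat.card_congr (revP_involutive.toPerm.subtypeEquiv h)

lemma onePos_revP_iff {k : ℕ} (hk : k ≤ n) : onePos (revP σ) (n - k + 1) ↔ onePos σ k := by
  refine forall_congr' fun hn => ?_
  rw [revP_symm_apply, Fin.val_rev]
  have := (σ.symm ⟨0, hn⟩).isLt
  omega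

lemma upSepPair_revP_iff (a : Fin n) : UpSepPair (revP σ) a ↔ DownSepPair σ a := by
  simp only [UpSepPair, DownSepPair, revP_symm_apply, revP_apply, Fin.rev_lt_rev]
  refine exists_congr fun _ => and_congr_right fun _ => Fin.revPerm.exists_congr fun p => ?_
  rw [Fin.revPerm_apply, Fin.lt_rev_iff, Fin.rev_lt_iff, and_left_comm]

lemma downSepPair_revP_iff (a : Fin n) : DownSepPair (revP σ) a ↔ UpSepPair σ a := by
  rw [← upSepPair_revP_iff, revP_involutive]

lemma noSepPairs_revP_iff : NoSepPairs (revP σ) ↔ NoSepPairs σ := by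
  simp only [NoSepPairs, SepPair, upSepPair_revP_iff, downSepPair_revP_iff, or_comm]

lemma altChain_revP_iff {t : ℕ} (b : Bool) (f : Fin t → Fin n) :
    AltChain (revP σ) b f ↔ AltChain σ (!b) f := by
  simp only [AltChain, upSepPair_revP_iff, downSepPair_revP_iff, iff_bool_not_iff, ite_not]

end Reversal

section AltLen

variable {n : ℕ}

/-- The maximal length of an alternating chain of separated pairs of `σ` whose first pair is down
oriented if `b = true` and up oriented if `b = false`. The empty chain counts for both values
of `b`. -/
noncomputable def altLen (σ : Equiv.Perm (Fin n)) (b : Bool) : ℕ :=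
  sSup {t : ℕ | ∃ f : Fin t → Fin n, AltChain σ b f}

lemma revTier_eq_altLen (σ : Equiv.Perm (Fin n)) : revTier σ = altLen σ true := rfl

lemma altLen_revP (σ : Equiv.Perm (Fin n)) (b : Bool) : altLen (revP σ) b = altLen σ (!b) := by
  simp only [altLen, altChain_revP_iff]

variable {σ : Equiv.Perm (Fin n)} {b : Bool}

lemma AltChain.length_le {t : ℕ} {f : Fin t → Fin n} (h : AltChain σ b f) : t ≤ n := by
  simpa using Fintype.card_le_of_injective f h.1.injective

lemma AltChain.tail {t : ℕ} {f : Fin (t + 1) → Fin n} (h : AltChain σ b f) :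
    AltChain σ (!b) (Fin.tail f) := by
  refine ⟨h.1.comp Fin.strictMono_succ, fun j => ?_⟩
  have parity_flip : ((j.succ : ℕ) % 2 = 0 ↔ b = true) ↔ ((j : ℕ) % 2 = 0 ↔ (!b) = true) := by
    rw [iff_bool_not_iff, not_iff, Fin.val_succ, Nat.succ_mod_two_eq_zero_iff,
      Nat.mod_two_not_eq_zero]
  simpa only [parity_flip, Fin.tail] using h.2 j.succ

variable (σ b)

lemma nonempty_altChain_lengths : {t : ℕ | ∃ f : Fin t → Fin n, AltChain σ b f}.Nonempty :=
  ⟨0, Fin.elim0, fun i => i.elim0, fun i => i.elim0⟩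

lemma bddAbove_altChain_lengths : BddAbove {t : ℕ | ∃ f : Fin t → Fin n, AltChain σ b f} :=
  ⟨n, fun _ ⟨_, hf⟩ => hf.length_le⟩

lemma exists_altChain_altLen : ∃ f : Fin (altLen σ b) → Fin n, AltChain σ b f :=
  Nat.sSup_mem (nonempty_altChain_lengths σ b) (bddAbove_altChain_lengths σ b)

variable {σ b} in
lemma AltChain.le_altLen {t : ℕ} {f : Fin t → Fin n} (h : AltChain σ b f) : t ≤ altLen σ b :=
  le_csSup (bddAbove_altChain_lengths σ b) ⟨f, h⟩

lemma altLen_le_altLen_not_add_one : altLen σ b ≤ altLen σ (!b) + 1 := by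
  obtain ⟨f, hf⟩ := exists_altChain_altLen σ b
  generalize altLen σ b = t at f
  cases t with
  | zero => exact Nat.zero_le _
  | succ t => exact Nat.succ_le_succ hf.tail.le_altLen

lemma maxAltLen_eq_max : maxAltLen σ = max (altLen σ b) (altLen σ (!b)) := by
  have lengths_eq_union : {t : ℕ | ∃ c, ∃ f : Fin t → Fin n, AltChain σ c f} =
      {t | ∃ f : Fin t → Fin n, AltChain σ b f} ∪ {t | ∃ f : Fin t → Fin n, AltChain σ (!b) f} := by
    ext t
    cases b <;> simp [or_comm]
  rw [maxAltLen, lengths_eq_union, csSup_union (bddAbove_altChain_lengths σ b)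
    (nonempty_altChain_lengths σ b) (bddAbove_altChain_lengths σ _)
    (nonempty_altChain_lengths σ _)]
  rfl

lemma exists_altChain_maxAltLen_iff :
    (∃ f : Fin (maxAltLen σ) → Fin n, AltChain σ b f) ↔ altLen σ (!b) ≤ altLen σ b := by
  rw [maxAltLen_eq_max σ b]
  constructor
  · rintro ⟨f, hf⟩
    exact (le_max_right _ _).trans hf.le_altLen
  · intro h
    rw [max_eq_left h]
    exact exists_altChain_altLen σ b

lemma one_le_maxAltLen_and_not_exists_altChain_iff :
    (1 ≤ maxAltLen σ ∧ ¬∃ f : Fin (maxAltLen σ) → Fin n, AltChain σ b f) ↔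
      altLen σ (!b) = altLen σ b + 1 := by
  have altLen_not_le := altLen_le_altLen_not_add_one σ (!b)
  rw [Bool.not_not] at altLen_not_le
  rw [exists_altChain_maxAltLen_iff, maxAltLen_eq_max σ b]
  omega

lemma upOriented_iff : UpOriented σ ↔ altLen σ false = altLen σ true + 1 :=
  one_le_maxAltLen_and_not_exists_altChain_iff σ true

lemma downOriented_iff : DownOriented σ ↔ altLen σ true = altLen σ false + 1 :=
  one_le_maxAltLen_and_not_exists_altChain_iff σ false

lemma upOriented_and_revTier_iff_revP (t : ℕ) :
    UpOriented σ ∧ revTier σ = t ↔ DownOriented (revP σ) ∧ revTier (revP σ) = t + 1 := by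
  simp only [upOriented_iff, downOriented_iff, revTier_eq_altLen, altLen_revP, Bool.not_true,
    Bool.not_false]
  omega

end AltLen

/-- `η(n,k) = η(n,n-k+1)` and `μ_U(n,t,k) = μ_D(n,t+1,n-k+1)`. -/
theorem reversal_identities (n t k : ℕ) (hn : 1 ≤ n) (hk : 1 ≤ k) (hkn : k ≤ n) :
    eta n k = eta n (n - k + 1) ∧ muU n t k = muD n (t + 1) (n - k + 1) := by
  refine ⟨card_subtype_eq_of_iff_revP fun σ => ?_, card_subtype_eq_of_iff_revP fun σ => ?_⟩
  · rw [noSepPairs_revP_iff, onePos_revP_iff σ hkn]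
  · rw [← and_assoc, ← and_assoc, upOriented_and_revTier_iff_revP, onePos_revP_iff σ hkn]
end

section
/- For every t ≥ 1 and every n, the number μ_U(n, t, n−2) of up-oriented permutations of length n with rev-tier t and entry 1 in position n−2 equals the number of permutations of length at most n−1 with rev-tier t whose entry 1 is in the final position; that is, μ_U(n, t, n−2) = Σ_{m=1}^{n−1} μ_D(m, t, m). -/
/-!
Deleting the entry `1` of a permutation leaves its other separated pairs intact, since `1` never
separates anything. Let `σ` arise from `τ` by inserting a new entry `1`. The pair `(1, 2)` of `σ` is
separated unless its two entries are adjacent. If it is separated, prepending it lengthens the best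
alternating chain of `τ` of the opposite orientation, so `σ` takes the orientation of `(1, 2)`.
Consequently a permutation whose entry `1` is in one of the last two positions has no separated pair
or is down-oriented: `(1, 2)` has no room to be up oriented, and if it is not separated, deleting
`1` leaves a permutation of the same kind.

Now let `1` be in position `n - 2` of `σ`, and look at the entry `2`. If it is left of `1` and not
adjacent, `σ` is down-oriented. If it is immediately to the right of `1`, then `σ` is oriented as
`τ`, whose least entry is penultimate, so `σ` is not up-oriented. If it is immediately to the left
of `1`, then `τ` is counted by `μ_U(n - 1, t, n - 3)`. If it is last, then `σ` is up-oriented with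
the rev-tier of `τ`, which is counted by `μ_D(n - 1, t, n - 1)`. Hence
`μ_U(n, t, n - 2) = μ_U(n - 1, t, n - 3) + μ_D(n - 1, t, n - 1)`.

Below, entries and positions are elements of `Fin n`, so the entries `1` and `2` are `0` and `1`.
-/

section

open Equiv (Perm)

/-! ### Alternating chains -/

section Chains

variable {n t : ℕ} {σ : Perm (Fin n)} {b : Bool}

/-- `(a, a+1)` is a separated pair of `σ` of the given orientation. As in `AltChain`, `true` stands
for down oriented; a Boolean orientation lets both cases be treated at once. -/
def OrientedSepPair (σ : Perm (Fin n)) (isDown : Bool) (a : Fin n) : Prop :=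
  bif isDown then DownSepPair σ a else UpSepPair σ a

/-- `σ` has an alternating chain of `t` separated pairs, the first of orientation `b`. -/
def HasAltChain (σ : Perm (Fin n)) (b : Bool) (t : ℕ) : Prop :=
  ∃ f : Fin t → Fin n, AltChain σ b f

/-- The greatest length of an alternating chain of separated pairs of `σ` whose first pair has
orientation `b`; for `b = true` this is `revTier σ`. -/
noncomputable def maxAltLenFrom (σ : Perm (Fin n)) (b : Bool) : ℕ :=
  sSup {t | HasAltChain σ b t}

theorem revTier_eq_maxAltLenFrom (σ : Perm (Fin n)) : revTier σ = maxAltLenFrom σ true :=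
  rfl

theorem OrientedSepPair.not_opposite {a : Fin n} (h : OrientedSepPair σ b a) :
    ¬ OrientedSepPair σ (!b) a := by
  cases b <;> exact fun h' => lt_asymm h.2.1 h'.2.1

theorem noSepPairs_iff : NoSepPairs σ ↔ ∀ b a, ¬ OrientedSepPair σ b a := by
  simp only [NoSepPairs, SepPair, not_or, forall_and, Bool.forall_bool, OrientedSepPair, cond_false,
    cond_true]

theorem altChain_iff {f : Fin t → Fin n} :
    AltChain σ b f ↔ StrictMono f ∧ ∀ j : Fin t, OrientedSepPair σ (b ^^ (j : ℕ).bodd) (f j) := by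
  refine and_congr_right fun _ => forall_congr' fun j => ?_
  rw [Nat.mod_two_of_bodd, OrientedSepPair]
  cases b <;> cases (j : ℕ).bodd <;> simp

theorem altChain_cons {a : Fin n} {f : Fin t → Fin n} :
    AltChain σ b (Fin.cons a f) ↔
      OrientedSepPair σ b a ∧ (∀ j, a < f j) ∧ AltChain σ (!b) f := by
  simp only [altChain_iff, Fin.strictMono_cons, Fin.forall_fin_succ, Fin.cons_zero, Fin.cons_succ,
    Fin.val_zero, Fin.val_succ, Nat.bodd_zero, Nat.bodd_succ, Bool.xor_false, Bool.xor_not,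
    Bool.not_xor]
  tauto

theorem hasAltChain_zero (σ : Perm (Fin n)) (b : Bool) : HasAltChain σ b 0 :=
  ⟨Fin.elim0, fun i => i.elim0, fun i => i.elim0⟩

theorem hasAltChain_succ : HasAltChain σ b (t + 1) ↔
    ∃ a, OrientedSepPair σ b a ∧ ∃ f : Fin t → Fin n, (∀ j, a < f j) ∧ AltChain σ (!b) f := by
  simp only [HasAltChain, Fin.exists_fin_succ_pi, altChain_cons, exists_and_left]

theorem HasAltChain.le (h : HasAltChain σ b t) : t ≤ n := by
  obtain ⟨f, hf, -⟩ := h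
  simpa using Fintype.card_le_of_injective f hf.injective

theorem HasAltChain.mono {s : ℕ} (h : HasAltChain σ b t) (hst : s ≤ t) : HasAltChain σ b s := by
  obtain ⟨f, hf, hpair⟩ := h
  exact ⟨f ∘ Fin.castLE hst, hf.comp (Fin.strictMono_castLE hst),
    fun j => hpair (Fin.castLE hst j)⟩

theorem le_maxAltLenFrom_iff : t ≤ maxAltLenFrom σ b ↔ HasAltChain σ b t := by
  have bdd : BddAbove {t | HasAltChain σ b t} := ⟨n, fun _ => HasAltChain.le⟩
  exact ⟨(Nat.sSup_mem ⟨0, hasAltChain_zero σ b⟩ bdd : HasAltChain σ b _).mono, le_csSup bdd⟩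

theorem maxAltLen_eq_max_s17 (σ : Perm (Fin n)) :
    maxAltLen σ = max (maxAltLenFrom σ true) (maxAltLenFrom σ false) := by
  have bdd : BddAbove {t | ∃ b, HasAltChain σ b t} := ⟨n, fun _ ⟨_, h⟩ => h.le⟩
  apply le_antisymm
  · refine csSup_le ⟨0, true, hasAltChain_zero σ true⟩ ?_
    rintro t ⟨_ | _, h⟩
    · exact le_max_of_le_right (le_maxAltLenFrom_iff.2 h)
    · exact le_max_of_le_left (le_maxAltLenFrom_iff.2 h)
  · exact max_le (le_csSup bdd ⟨true, le_maxAltLenFrom_iff.1 le_rfl⟩)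
      (le_csSup bdd ⟨false, le_maxAltLenFrom_iff.1 le_rfl⟩)

theorem upOriented_iff_lt : UpOriented σ ↔ maxAltLenFrom σ true < maxAltLenFrom σ false := by
  change 1 ≤ maxAltLen σ ∧ ¬ HasAltChain σ true (maxAltLen σ) ↔ _
  rw [← le_maxAltLenFrom_iff, maxAltLen_eq_max_s17]
  omega

theorem downOriented_iff_lt : DownOriented σ ↔ maxAltLenFrom σ false < maxAltLenFrom σ true := by
  change 1 ≤ maxAltLen σ ∧ ¬ HasAltChain σ false (maxAltLen σ) ↔ _
  rw [← le_maxAltLenFrom_iff, maxAltLen_eq_max_s17]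
  omega

theorem DownOriented.not_upOriented (h : DownOriented σ) : ¬ UpOriented σ := by
  rw [downOriented_iff_lt] at h
  rw [upOriented_iff_lt]
  exact h.not_gt

theorem NoSepPairs.maxAltLenFrom_eq_zero (h : NoSepPairs σ) (b : Bool) :
    maxAltLenFrom σ b = 0 := by
  by_contra hne
  obtain ⟨a, ha, -⟩ := hasAltChain_succ.1 (le_maxAltLenFrom_iff.1 (Nat.one_le_iff_ne_zero.2 hne))
  exact noSepPairs_iff.1 h b a ha

theorem NoSepPairs.revTier_eq_zero (h : NoSepPairs σ) : revTier σ = 0 :=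
  h.maxAltLenFrom_eq_zero true

theorem NoSepPairs.not_upOriented (h : NoSepPairs σ) : ¬ UpOriented σ := by
  simp only [upOriented_iff_lt, h.maxAltLenFrom_eq_zero, lt_irrefl, not_false_iff]

theorem NoSepPairs.not_downOriented (h : NoSepPairs σ) : ¬ DownOriented σ := by
  simp only [downOriented_iff_lt, h.maxAltLenFrom_eq_zero, lt_irrefl, not_false_iff]

theorem noSepPairs_of_length_le_one (hn : n ≤ 1) (σ : Perm (Fin n)) : NoSepPairs σ := by
  rintro a (⟨h, -⟩ | ⟨h, -⟩) <;> omega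

end Chains

/-! ### Entries separating two positions -/

section LargerBetween

variable {n : ℕ} {σ : Perm (Fin n)}

/-- Some entry of `σ` strictly between the positions `i` and `j` exceeds `v`. This is the condition
common to `UpSepPair` and `DownSepPair`, and it forces `i < j`. -/
def HasLargerBetween (σ : Perm (Fin n)) (v : ℕ) (i j : Fin n) : Prop :=
  ∃ q, i < q ∧ q < j ∧ v < (σ q : ℕ)

theorem upSepPair_iff {a : Fin n} : UpSepPair σ a ↔
    ∃ h : (a : ℕ) + 1 < n, HasLargerBetween σ (a + 1) (σ.symm a) (σ.symm ⟨a + 1, h⟩) :=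
  exists_congr fun _ => and_iff_right_of_imp fun ⟨_, hl, hr, _⟩ => hl.trans hr

theorem downSepPair_iff {a : Fin n} : DownSepPair σ a ↔
    ∃ h : (a : ℕ) + 1 < n, HasLargerBetween σ (a + 1) (σ.symm ⟨a + 1, h⟩) (σ.symm a) :=
  exists_congr fun _ => and_iff_right_of_imp fun ⟨_, hl, hr, _⟩ => hl.trans hr

theorem hasLargerBetween_iff_add_one_lt {v : ℕ} {i j : Fin n}
    (hsmall : ∀ q, (σ q : ℕ) ≤ v → q = i ∨ q = j) :
    HasLargerBetween σ v i j ↔ (i : ℕ) + 1 < j := by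
  constructor
  · rintro ⟨q, hiq, hqj, -⟩
    exact (Nat.succ_le_of_lt hiq).trans_lt hqj
  · intro hij
    refine ⟨⟨i + 1, hij.trans j.isLt⟩, Nat.lt_succ_self i, hij, ?_⟩
    by_contra! hle
    rcases hsmall _ hle with h | h <;> simp only [Fin.ext_iff] at h <;> omega

end LargerBetween

/-! ### Inserting a least entry -/

section InsertMin

variable {n : ℕ}

theorem val_succAbove_eq_ite (p : Fin (n + 1)) (i : Fin n) :
    (p.succAbove i : ℕ) = if (i : ℕ) < p then (i : ℕ) else i + 1 := by
  simp only [Fin.succAbove, Fin.lt_def, Fin.val_castSucc, apply_ite Fin.val, Fin.val_succ]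

/-- The permutation obtained from `τ` by raising all entries by one and inserting the entry `0` at
position `p`. -/
def insertMin (p : Fin (n + 1)) (τ : Perm (Fin n)) : Perm (Fin (n + 1)) :=
  (finSuccEquiv' p).trans (τ.optionCongr.trans (finSuccEquiv' 0).symm)

@[simp]
theorem insertMin_self (p : Fin (n + 1)) (τ : Perm (Fin n)) : insertMin p τ p = 0 := by
  simp [insertMin]

@[simp]
theorem insertMin_succAbove (p : Fin (n + 1)) (τ : Perm (Fin n)) (i : Fin n) :
    insertMin p τ (p.succAbove i) = (τ i).succ := by
  simp [insertMin]

@[simp]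
theorem insertMin_symm_zero (p : Fin (n + 1)) (τ : Perm (Fin n)) : (insertMin p τ).symm 0 = p := by
  simp [Equiv.symm_apply_eq]

@[simp]
theorem insertMin_symm_succ (p : Fin (n + 1)) (τ : Perm (Fin n)) (a : Fin n) :
    (insertMin p τ).symm a.succ = p.succAbove (τ.symm a) := by
  simp [Equiv.symm_apply_eq]

theorem insertMin_injective (p : Fin (n + 1)) : Function.Injective (insertMin (n := n) p) := by
  intro τ τ' h
  ext1 i
  simpa using congrArg (· (p.succAbove i)) h

theorem exists_insertMin_eq (σ : Perm (Fin (n + 1))) : ∃ τ, insertMin (σ.symm 0) τ = σ := by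
  let e : Option (Fin n) ≃ Option (Fin n) :=
    (finSuccEquiv' (σ.symm 0)).symm.trans (σ.trans (finSuccEquiv' 0))
  have he : e.removeNone.optionCongr = e := by
    rw [map_equiv_removeNone]
    simp [e, Perm.mul_def]
  exact ⟨e.removeNone, Equiv.ext fun q => by simp [insertMin, he, e]⟩

theorem onePos_iff {σ : Perm (Fin (n + 1))} {k : ℕ} : onePos σ k ↔ (σ.symm 0 : ℕ) + 1 = k :=
  ⟨fun h => h n.succ_pos, fun h _ => h⟩

theorem card_onePos_eq_card_insertMin (P : Perm (Fin (n + 1)) → Prop) (p : Fin (n + 1)) :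
    Nat.card {σ // P σ ∧ onePos σ (p + 1)} = Nat.card {τ // P (insertMin p τ)} := by
  symm
  refine Nat.card_eq_of_bijective
    (fun τ => ⟨insertMin p τ.1, τ.2, onePos_iff.2 (by rw [insertMin_symm_zero])⟩) ⟨?_, ?_⟩
  · exact fun τ τ' h => Subtype.ext (insertMin_injective p (congrArg Subtype.val h))
  · rintro ⟨σ, hσ, hpos⟩
    obtain rfl : σ.symm 0 = p := Fin.ext (Nat.succ_injective (onePos_iff.1 hpos))
    obtain ⟨τ, hτ⟩ := exists_insertMin_eq σ
    exact ⟨⟨τ, hτ.symm ▸ hσ⟩, Subtype.ext hτ⟩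

end InsertMin

/-! ### Separated pairs after an insertion -/

section SepPairsInsertMin

variable {n t : ℕ} {p : Fin (n + 1)} {τ : Perm (Fin n)} {b : Bool}

theorem hasLargerBetween_insertMin {v : ℕ} {i j : Fin n} :
    HasLargerBetween (insertMin p τ) (v + 1) (p.succAbove i) (p.succAbove j) ↔
      HasLargerBetween τ v i j := by
  simp [HasLargerBetween, Fin.exists_iff_succAbove p]

theorem orientedSepPair_insertMin_succ {a : Fin n} :
    OrientedSepPair (insertMin p τ) b a.succ ↔ OrientedSepPair τ b a := by
  have hsucc (h : (a : ℕ) + 1 < n) :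
      (insertMin p τ).symm ⟨a + 1 + 1, Nat.succ_lt_succ h⟩ = p.succAbove (τ.symm ⟨a + 1, h⟩) :=
    insertMin_symm_succ p τ ⟨a + 1, h⟩
  cases b
  · simp only [OrientedSepPair, cond_false, upSepPair_iff, Fin.val_succ, Nat.add_lt_add_iff_right,
      insertMin_symm_succ]
    exact exists_congr fun h => by rw [hsucc h, hasLargerBetween_insertMin]
  · simp only [OrientedSepPair, cond_true, downSepPair_iff, Fin.val_succ, Nat.add_lt_add_iff_right,
      insertMin_symm_succ]
    exact exists_congr fun h => by rw [hsucc h, hasLargerBetween_insertMin]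

theorem exists_pos_altChain_insertMin_iff :
    (∃ f : Fin t → Fin (n + 1), (∀ j, 0 < f j) ∧ AltChain (insertMin p τ) b f) ↔
      HasAltChain τ b t := by
  simp only [HasAltChain, altChain_iff]
  constructor
  · rintro ⟨f, hpos, hf, hpair⟩
    refine ⟨fun j => (f j).pred (hpos j).ne', fun i j hij => Fin.pred_lt_pred_iff.2 (hf hij),
      fun j => ?_⟩
    rw [← orientedSepPair_insertMin_succ (p := p), Fin.succ_pred]
    exact hpair j
  · rintro ⟨f, hf, hpair⟩
    exact ⟨Fin.succ ∘ f, fun j => (f j).succ_pos, Fin.strictMono_succ.comp hf,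
      fun j => orientedSepPair_insertMin_succ.2 (hpair j)⟩

theorem hasAltChain_insertMin_succ_iff (h : OrientedSepPair (insertMin p τ) b 0) :
    HasAltChain (insertMin p τ) b (t + 1) ↔ HasAltChain τ (!b) t := by
  rw [hasAltChain_succ, ← exists_pos_altChain_insertMin_iff (p := p)]
  constructor
  · rintro ⟨a, -, f, haf, hf⟩
    exact ⟨f, fun j => (Fin.zero_le a).trans_lt (haf j), hf⟩
  · exact fun hf => ⟨0, h, hf⟩

theorem hasAltChain_insertMin_iff (h : ¬ OrientedSepPair (insertMin p τ) b 0) :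
    HasAltChain (insertMin p τ) b t ↔ HasAltChain τ b t := by
  rw [← exists_pos_altChain_insertMin_iff (p := p)]
  refine ⟨?_, fun ⟨f, _, hf⟩ => ⟨f, hf⟩⟩
  rintro ⟨f, hf⟩
  refine ⟨f, fun j => ?_, hf⟩
  obtain ⟨hmono, hpair⟩ := altChain_iff.1 hf
  let first : Fin t := ⟨0, j.pos⟩
  have hfirst : f first ≠ 0 := fun h0 => h (by simpa [first, h0] using hpair first)
  exact (Fin.pos_iff_ne_zero.2 hfirst).trans_le (hmono.monotone (Nat.zero_le j))

theorem maxAltLenFrom_insertMin_of_orientedSepPair (h : OrientedSepPair (insertMin p τ) b 0) :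
    maxAltLenFrom (insertMin p τ) b = maxAltLenFrom τ (!b) + 1 := by
  refine eq_of_forall_le_iff fun t => ?_
  cases t with
  | zero => simp only [Nat.zero_le]
  | succ t =>
    rw [le_maxAltLenFrom_iff, hasAltChain_insertMin_succ_iff h, Nat.succ_le_succ_iff,
      le_maxAltLenFrom_iff]

theorem maxAltLenFrom_insertMin_of_not_orientedSepPair
    (h : ¬ OrientedSepPair (insertMin p τ) b 0) :
    maxAltLenFrom (insertMin p τ) b = maxAltLenFrom τ b :=
  eq_of_forall_le_iff fun _ => by
    rw [le_maxAltLenFrom_iff, hasAltChain_insertMin_iff h, le_maxAltLenFrom_iff]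

end SepPairsInsertMin

/-! ### Position of the least entry and orientation -/

section Orientation

variable {n : ℕ} {p : Fin (n + 2)} {τ : Perm (Fin (n + 1))}

theorem insertMin_symm_one : (insertMin p τ).symm 1 = p.succAbove (τ.symm 0) :=
  insertMin_symm_succ p τ 0

theorem eq_or_eq_of_insertMin_le_one {q : Fin (n + 2)} (hq : (insertMin p τ q : ℕ) ≤ 1) :
    q = p ∨ q = p.succAbove (τ.symm 0) := by
  rcases Fin.eq_self_or_eq_succAbove p q with rfl | ⟨i, rfl⟩
  · exact .inl rfl
  · have hi : τ i = 0 := by simpa using hq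
    exact .inr (by rw [← hi, Equiv.symm_apply_apply])

theorem upSepPair_insertMin_zero_iff : UpSepPair (insertMin p τ) 0 ↔ (p : ℕ) < τ.symm 0 := by
  have hbetween : UpSepPair (insertMin p τ) 0 ↔
      HasLargerBetween (insertMin p τ) 1 p (p.succAbove (τ.symm 0)) := by
    rw [upSepPair_iff, exists_prop_of_true (by simp), insertMin_symm_zero, ← insertMin_symm_one]
    rfl
  rw [hbetween, hasLargerBetween_iff_add_one_lt fun _ => eq_or_eq_of_insertMin_le_one,
    val_succAbove_eq_ite]
  split_ifs <;> omega

theorem downSepPair_insertMin_zero_iff :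
    DownSepPair (insertMin p τ) 0 ↔ (τ.symm 0 : ℕ) + 1 < p := by
  have hbetween : DownSepPair (insertMin p τ) 0 ↔
      HasLargerBetween (insertMin p τ) 1 (p.succAbove (τ.symm 0)) p := by
    rw [downSepPair_iff, exists_prop_of_true (by simp), insertMin_symm_zero, ← insertMin_symm_one]
    rfl
  rw [hbetween, hasLargerBetween_iff_add_one_lt fun _ h => (eq_or_eq_of_insertMin_le_one h).symm,
    val_succAbove_eq_ite]
  split_ifs <;> omega

theorem revTier_insertMin (h : (p : ℕ) ≤ τ.symm 0 + 1) : revTier (insertMin p τ) = revTier τ :=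
  maxAltLenFrom_insertMin_of_not_orientedSepPair (b := true)
    (downSepPair_insertMin_zero_iff.not.2 h.not_gt)

theorem maxAltLenFrom_false_insertMin (h : (τ.symm 0 : ℕ) ≤ p) :
    maxAltLenFrom (insertMin p τ) false = maxAltLenFrom τ false :=
  maxAltLenFrom_insertMin_of_not_orientedSepPair (upSepPair_insertMin_zero_iff.not.2 h.not_gt)

theorem upOriented_insertMin_of_lt (h : (p : ℕ) < τ.symm 0) : UpOriented (insertMin p τ) := by
  have hup : OrientedSepPair (insertMin p τ) false 0 := upSepPair_insertMin_zero_iff.2 h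
  have hother : ¬ OrientedSepPair (insertMin p τ) true 0 := hup.not_opposite
  rw [upOriented_iff_lt, maxAltLenFrom_insertMin_of_orientedSepPair hup,
    maxAltLenFrom_insertMin_of_not_orientedSepPair hother]
  exact Nat.lt_succ_self _

theorem downOriented_insertMin_of_lt (h : (τ.symm 0 : ℕ) + 1 < p) :
    DownOriented (insertMin p τ) := by
  have hdown : OrientedSepPair (insertMin p τ) true 0 := downSepPair_insertMin_zero_iff.2 h
  have hother : ¬ OrientedSepPair (insertMin p τ) false 0 := hdown.not_opposite
  rw [downOriented_iff_lt, maxAltLenFrom_insertMin_of_orientedSepPair hdown,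
    maxAltLenFrom_insertMin_of_not_orientedSepPair hother]
  exact Nat.lt_succ_self _

theorem upOriented_insertMin_iff (hle : (τ.symm 0 : ℕ) ≤ p) (hge : (p : ℕ) ≤ τ.symm 0 + 1) :
    UpOriented (insertMin p τ) ↔ UpOriented τ := by
  rw [upOriented_iff_lt, upOriented_iff_lt, ← revTier_eq_maxAltLenFrom, revTier_insertMin hge,
    maxAltLenFrom_false_insertMin hle, revTier_eq_maxAltLenFrom]

theorem downOriented_insertMin_iff (hle : (τ.symm 0 : ℕ) ≤ p) (hge : (p : ℕ) ≤ τ.symm 0 + 1) :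
    DownOriented (insertMin p τ) ↔ DownOriented τ := by
  rw [downOriented_iff_lt, downOriented_iff_lt, ← revTier_eq_maxAltLenFrom, revTier_insertMin hge,
    maxAltLenFrom_false_insertMin hle, revTier_eq_maxAltLenFrom]

theorem NoSepPairs.insertMin (h : NoSepPairs τ) (hle : (τ.symm 0 : ℕ) ≤ p)
    (hge : (p : ℕ) ≤ τ.symm 0 + 1) : NoSepPairs (insertMin p τ) := by
  refine noSepPairs_iff.2 fun b a => ?_
  cases a using Fin.cases with
  | zero =>
    cases b
    · exact upSepPair_insertMin_zero_iff.not.2 hle.not_gt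
    · exact downSepPair_insertMin_zero_iff.not.2 hge.not_gt
  | succ a => exact orientedSepPair_insertMin_succ.not.2 (noSepPairs_iff.1 h b a)

theorem noSepPairs_or_downOriented_of_le (σ : Perm (Fin (n + 1)))
    (h : n ≤ (σ.symm 0 : ℕ) + 1) : NoSepPairs σ ∨ DownOriented σ := by
  induction n with
  | zero => exact .inl (noSepPairs_of_length_le_one le_rfl σ)
  | succ n ih =>
    obtain ⟨τ, hτ⟩ := exists_insertMin_eq σ
    generalize σ.symm 0 = p at h hτ
    subst hτ
    rcases lt_or_ge ((τ.symm 0 : ℕ) + 1) p with hdown | hge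
    · exact .inr (downOriented_insertMin_of_lt hdown)
    · have hle : (τ.symm 0 : ℕ) ≤ p := by omega
      exact (ih τ (by omega)).imp (·.insertMin hle hge) (downOriented_insertMin_iff hle hge).2

end Orientation

/-! ### The recursion -/

section Recursion

variable {N t : ℕ}

theorem upOriented_insertMin_antepenultimate_iff (ht : 1 ≤ t) {p : Fin (N + 3)} (hp : (p : ℕ) = N)
    (τ : Perm (Fin (N + 2))) :
    UpOriented (insertMin p τ) ∧ revTier (insertMin p τ) = t ↔
      (UpOriented τ ∧ revTier τ = t ∧ onePos τ N) ∨
        (DownOriented τ ∧ revTier τ = t ∧ onePos τ (N + 2)) := by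
  have hlast := noSepPairs_or_downOriented_of_le τ
  simp only [onePos_iff]
  obtain hfar | hleft | hright | hfinal : (τ.symm 0 : ℕ) + 1 < p ∨ (τ.symm 0 : ℕ) + 1 = p ∨
      (τ.symm 0 : ℕ) = p ∨ (τ.symm 0 : ℕ) = p + 1 := by omega
  · have hnot := (downOriented_insertMin_of_lt hfar).not_upOriented
    simp [hnot, show (τ.symm 0 : ℕ) + 1 ≠ N by omega, show (τ.symm 0 : ℕ) ≠ N + 1 by omega]
  · rw [upOriented_insertMin_iff (by omega) (by omega), revTier_insertMin (by omega)]
    simp [hleft, hp]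
  · have hnot : ¬ UpOriented τ :=
      (hlast (by omega)).elim NoSepPairs.not_upOriented DownOriented.not_upOriented
    rw [upOriented_insertMin_iff (by omega) (by omega)]
    simp [hnot, hright, hp]
  · have hup := upOriented_insertMin_of_lt (p := p) (τ := τ) (by omega)
    have hdown : revTier τ = t → DownOriented τ := fun hτ =>
      (hlast (by omega)).resolve_left fun hno => by have := hno.revTier_eq_zero; omega
    rw [revTier_insertMin (by omega)]
    simpa [hup, hfinal, hp, show N + 1 + 1 ≠ N by omega] using hdown

theorem muU_antepenultimate_recursion (N : ℕ) (ht : 1 ≤ t) :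
    muU (N + 3) t (N + 1) = muU (N + 2) t N + muD (N + 2) t (N + 2) := by
  classical
  let p : Fin (N + 3) := ⟨N, by omega⟩
  have hdisj : Disjoint (fun τ : Perm (Fin (N + 2)) => UpOriented τ ∧ revTier τ = t ∧ onePos τ N)
      fun τ => DownOriented τ ∧ revTier τ = t ∧ onePos τ (N + 2) := by
    refine Pi.disjoint_iff.2 fun τ => Prop.disjoint_iff.2 ?_
    rintro ⟨⟨hup, -⟩, hdown, -⟩
    exact hdown.not_upOriented hup
  calc muU (N + 3) t (N + 1)
      = Nat.card {σ : Perm (Fin (N + 3)) //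
          (UpOriented σ ∧ revTier σ = t) ∧ onePos σ ((p : ℕ) + 1)} := by
        simp only [muU, and_assoc, p]
    _ = Nat.card {τ : Perm (Fin (N + 2)) // (UpOriented τ ∧ revTier τ = t ∧ onePos τ N) ∨
          (DownOriented τ ∧ revTier τ = t ∧ onePos τ (N + 2))} := by
        rw [card_onePos_eq_card_insertMin (fun σ => UpOriented σ ∧ revTier σ = t)]
        simp only [upOriented_insertMin_antepenultimate_iff ht (p := p) rfl]
    _ = muU (N + 2) t N + muD (N + 2) t (N + 2) := by
        rw [Nat.card_congr (subtypeOrEquiv _ _ hdisj), Nat.card_sum, muU, muD]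

theorem muU_position_zero (n t : ℕ) : muU n t 0 = 0 := by
  refine Nat.card_eq_zero.2 (.inl ⟨fun ⟨σ, hup, _, hpos⟩ => ?_⟩)
  cases n with
  | zero => exact (noSepPairs_of_length_le_one zero_le_one σ).not_upOriented hup
  | succ n => exact Nat.succ_ne_zero _ (onePos_iff.1 hpos)

theorem muD_length_one (t k : ℕ) : muD 1 t k = 0 :=
  Nat.card_eq_zero.2 (.inl ⟨fun ⟨σ, hdown, _⟩ =>
    (noSepPairs_of_length_le_one le_rfl σ).not_downOriented hdown⟩)

end Recursion

end

/-- `μ_U(n,t,n-2)` equals the number of permutations of length at most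
`n-1`, rev-tier `t`, with entry `1` in the final position. -/
theorem muU_penultimate (n t : ℕ) (ht : 1 ≤ t) :
    muU n t (n - 2) = ∑ m ∈ Finset.Icc 1 (n - 1), muD m t m := by
  rcases n with _ | _ | n
  · simp [muU_position_zero]
  · simp [muU_position_zero]
  · induction n with
    | zero => simp [muU_position_zero, muD_length_one]
    | succ n ih =>
      calc muU (n + 3) t (n + 1)
          = muU (n + 2) t n + muD (n + 2) t (n + 2) := muU_antepenultimate_recursion n ht
        _ = ∑ m ∈ Finset.Icc 1 (n + 1), muD m t m + muD (n + 2) t (n + 2) := congrArg (· + _) ih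
        _ = ∑ m ∈ Finset.Icc 1 (n + 2), muD m t m :=
            (Finset.sum_Icc_succ_top (by omega) _).symm
end
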